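/- arXiv:math/0507209 — 2 statements merged into one kernel-verified Lean document; each statement's English description precedes it below -/
import Mathlib

section
/- Let k be a commutative ring and F a commutative Frobenius algebra over k with form B. Define on F the operations x ⋆₁ y := 2*(x*y), x ⋆₀ y := x*y, and ⟨x, y⟩ := B(x, y). Then these operations satisfy the six identities defining a Virasoro algebroid: for all x, y, z in F, (1) (x ⋆₁ y) ⋆₁ z = x ⋆₁ (y ⋆₁ z) − y ⋆₁ (x ⋆₁ z) + 2*((x ⋆₀ z) ⋆₁ y); (2) x ⋆₀ y = −(y ⋆₀ x) + y ⋆₁ x; (3) (x ⋆₀ y) ⋆₀ z = −(x ⋆₀ (y ⋆₁ z)) − ((x ⋆₀ z) ⋆₀ y) + 2*((x ⋆₀ z) ⋆₁ y); (4) (x ⋆₀ y) ⋆₁ z = (x ⋆₀ z) ⋆₁ y; (5) ⟨x ⋆₀ y, z⟩ = ⟨x ⋆₀ z, y⟩; (6) ⟨x ⋆₁ y, z⟩ = 4*⟨x ⋆₀ z, y⟩ − ⟨y, x ⋆₁ z⟩. -/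
/-!
Every product of `x`, `y`, `z` in a commutative associative algebra equals `x * (y * z)`, so the
identities between products only compare integer coefficients. Likewise, moving factors across an
invariant form shows that `B (x * y) z`, `B (x * z) y` and `B y (x * z)` are all equal to
`B x (y * z)`.
-/

/-- The six identities of a Virasoro algebroid on a module `V`, for the products `⋆₁` (`s₁`) and
`⋆₀` (`s₀`) and the pairing `⟨x, y⟩` (`B x y`). The pairing takes values in an arbitrary module, and
integer coefficients are written as scalar multiples, so that `V` needs no unit. -/
structure IsVirasoroAlgebroid {k V M : Type*} [CommRing k] [AddCommGroup V] [Module k V]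
    [AddCommGroup M] [Module k M] (s₁ s₀ : V →ₗ[k] V →ₗ[k] V) (B : V →ₗ[k] V →ₗ[k] M) :
    Prop where
  s₁_s₁ (x y z : V) : s₁ (s₁ x y) z = s₁ x (s₁ y z) - s₁ y (s₁ x z) + 2 • s₁ (s₀ x z) y
  s₀_swap (x y : V) : s₀ x y = -s₀ y x + s₁ y x
  s₀_s₀ (x y z : V) : s₀ (s₀ x y) z = -s₀ x (s₁ y z) - s₀ (s₀ x z) y + 2 • s₁ (s₀ x z) y
  s₁_s₀_right_comm (x y z : V) : s₁ (s₀ x y) z = s₁ (s₀ x z) y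
  form_s₀_right_comm (x y z : V) : B (s₀ x y) z = B (s₀ x z) y
  form_s₁ (x y z : V) : B (s₁ x y) z = 4 • B (s₀ x z) y - B y (s₁ x z)

section InvariantForm

variable {A M : Type*} [CommMagma A] {B : A → A → M}

theorem invariant_form_mul_right_comm (hB : ∀ x y z, B (x * y) z = B x (y * z)) (x y z : A) :
    B (x * y) z = B (x * z) y := by
  rw [hB, mul_comm y z, ← hB]

theorem invariant_form_mul_swap (hB : ∀ x y z, B (x * y) z = B x (y * z)) (x y z : A) :
    B y (x * z) = B (x * z) y := by
  rw [← hB, mul_comm y x, invariant_form_mul_right_comm hB]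

end InvariantForm

theorem frobenius_virasoro_algebroid_general {k F M : Type*} [CommRing k] [NonUnitalCommRing F]
    [Module k F] [SMulCommClass k F F] [IsScalarTower k F F] [AddCommGroup M] [Module k M]
    (B : F →ₗ[k] F →ₗ[k] M) (hB : ∀ x y z : F, B (x * y) z = B x (y * z)) :
    IsVirasoroAlgebroid (2 • LinearMap.mul k F) (LinearMap.mul k F) B where
  s₁_s₁ x y z := by
    simp only [LinearMap.smul_apply, LinearMap.mul_apply', smul_mul_assoc, mul_smul_comm,
      mul_assoc, mul_left_comm y x z, mul_comm z y]
    abel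
  s₀_swap x y := by
    simp only [LinearMap.smul_apply, LinearMap.mul_apply', mul_comm y x]
    abel
  s₀_s₀ x y z := by
    simp only [LinearMap.smul_apply, LinearMap.mul_apply', mul_smul_comm, mul_assoc, mul_comm z y]
    abel
  s₁_s₀_right_comm x y z := by
    simp only [LinearMap.smul_apply, LinearMap.mul_apply', mul_right_comm x y z]
  form_s₀_right_comm := invariant_form_mul_right_comm (B := fun x y => B x y) hB
  form_s₁ x y z := by
    have right_comm : B (x * y) z = B (x * z) y :=
      invariant_form_mul_right_comm (B := fun x y => B x y) hB x y z
    have swap : B y (x * z) = B (x * z) y :=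
      invariant_form_mul_swap (B := fun x y => B x y) hB x y z
    simp only [LinearMap.smul_apply, LinearMap.mul_apply', map_nsmul, right_comm, swap]
    abel

/-- A commutative Frobenius algebra yields a Virasoro algebroid: with
`x ⋆₁ y = 2*(x*y)`, `x ⋆₀ y = x*y`, `⟨x,y⟩ = B x y`, the six axioms hold. -/
theorem frobenius_virasoro_algebroid (k : Type*) [CommRing k] (F : Type*) [CommRing F]
    [Algebra k F] (B : F →ₗ[k] F →ₗ[k] k)
    (hsymm : ∀ x y : F, B x y = B y x)
    (hfrob : ∀ x y z : F, B (x * y) z = B x (y * z))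
    (s₁ s₀ : F → F → F)
    (hs₁ : ∀ x y : F, s₁ x y = 2 * (x * y))
    (hs₀ : ∀ x y : F, s₀ x y = x * y) :
    ∀ x y z : F,
      (s₁ (s₁ x y) z = s₁ x (s₁ y z) - s₁ y (s₁ x z) + 2 * s₁ (s₀ x z) y) ∧
      (s₀ x y = -(s₀ y x) + s₁ y x) ∧
      (s₀ (s₀ x y) z = -(s₀ x (s₁ y z)) - s₀ (s₀ x z) y + 2 * s₁ (s₀ x z) y) ∧
      (s₁ (s₀ x y) z = s₁ (s₀ x z) y) ∧
      (B (s₀ x y) z = B (s₀ x z) y) ∧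
      (B (s₁ x y) z = 4 * B (s₀ x z) y - B y (s₁ x z)) := by
  intro x y z
  have h := frobenius_virasoro_algebroid_general B hfrob
  have identities : _ ∧ _ ∧ _ ∧ _ ∧ _ ∧ _ := ⟨h.s₁_s₁ x y z, h.s₀_swap x y, h.s₀_s₀ x y z,
    h.s₁_s₀_right_comm x y z, h.form_s₀_right_comm x y z, h.form_s₁ x y z⟩
  simp only [LinearMap.smul_apply, LinearMap.mul_apply'] at identities
  simpa only [hs₁, hs₀, nsmul_eq_mul, Nat.cast_ofNat] using identities
end

section
/- Let k be a commutative ring, V a k-module, m₁ : V × V → V a symmetric k-bilinear operation and m₀ : V × V → V a k-bilinear operation, satisfying for all x, y, z in V the identities m₁(m₁(x,y), z) = m₁(x, m₁(y,z)) − m₁(y, m₁(x,z)) + 2*m₁(m₀(x,z), y) and m₁(m₀(x,y), z) = m₁(m₀(x,z), y). Then for all x, y, z in V the cyclic sums satisfy 2*( m₁(x, m₀(y,z)) + m₁(y, m₀(z,x)) + m₁(z, m₀(x,y)) ) = m₁(x, m₁(y,z)) + m₁(y, m₁(z,x)) + m₁(z, m₁(x,y)). -/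
section

variable {V : Type*} [AddCommGroup V] {m₁ m₀ : V → V → V}

theorem virasoro_two_nsmul_m₁_m₀ (hm₁symm : ∀ x y : V, m₁ x y = m₁ y x)
    (h1 : ∀ x y z : V,
      m₁ (m₁ x y) z = m₁ x (m₁ y z) - m₁ y (m₁ x z) + 2 • m₁ (m₀ x z) y)
    (x y z : V) :
    2 • m₁ x (m₀ y z) = m₁ x (m₁ y z) + m₁ z (m₁ x y) - m₁ y (m₁ z x) := by
  have h1_yxz : m₁ z (m₁ x y) =
      m₁ y (m₁ z x) - m₁ x (m₁ y z) + 2 • m₁ x (m₀ y z) := by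
    have h := h1 y x z
    rwa [hm₁symm (m₁ y x) z, hm₁symm y x, hm₁symm x z, hm₁symm (m₀ y z) x] at h
  rw [h1_yxz]
  abel

theorem virasoro_cyclic_ops_general (hm₁symm : ∀ x y : V, m₁ x y = m₁ y x)
    (h1 : ∀ x y z : V,
      m₁ (m₁ x y) z = m₁ x (m₁ y z) - m₁ y (m₁ x z) + 2 • m₁ (m₀ x z) y)
    (x y z : V) :
    2 • (m₁ x (m₀ y z) + m₁ y (m₀ z x) + m₁ z (m₀ x y)) =
      m₁ x (m₁ y z) + m₁ y (m₁ z x) + m₁ z (m₁ x y) := by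
  simp only [smul_add, virasoro_two_nsmul_m₁_m₀ hm₁symm h1]
  abel

end

/-- From axioms (1) and (4) of a Virasoro algebroid, the cyclic sums satisfy
`2 • Cycle (m₁ x (m₀ y z)) = Cycle (m₁ x (m₁ y z))`. -/
theorem virasoro_cyclic_ops (k : Type*) [CommRing k] (V : Type*) [AddCommGroup V]
    [Module k V]
    (m₁ m₀ : V →ₗ[k] V →ₗ[k] V)
    (hm₁symm : ∀ x y : V, m₁ x y = m₁ y x)
    (h1 : ∀ x y z : V,
      m₁ (m₁ x y) z = m₁ x (m₁ y z) - m₁ y (m₁ x z) + 2 • m₁ (m₀ x z) y)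
    (h4 : ∀ x y z : V, m₁ (m₀ x y) z = m₁ (m₀ x z) y) :
    ∀ x y z : V,
      2 • (m₁ x (m₀ y z) + m₁ y (m₀ z x) + m₁ z (m₀ x y)) =
        m₁ x (m₁ y z) + m₁ y (m₁ z x) + m₁ z (m₁ x y) := by
  exact virasoro_cyclic_ops_general (m₁ := (m₁ · ·)) (m₀ := (m₀ · ·)) hm₁symm h1
end
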